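/- For every τ in the complex upper half plane, E_{4,2}(τ) − E'_{4,2}(τ) = 32·η(4τ)⁸/η(2τ)⁴, E_{4,2}(τ) + E'_{4,2}(τ) = 2·η(τ)⁸/η(2τ)⁴, E_{4,2}(τ)² − E'_{4,2}(τ)² = 64·(η(τ)η(4τ)/η(2τ))⁸, and η(2τ)²⁴ = (η(τ)η(4τ))⁸·(η(τ)⁸ + 16·η(4τ)⁸). -/

import Mathlib

open Complex

/-- `q = exp(2πiτ)`. -/
noncomputable def qq (τ : ℂ) : ℂ := Complex.exp (2 * Real.pi * Complex.I * τ)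

/-- `σ_k(n) = Σ_{d ∣ n} d^k`, as a complex number. -/
noncomputable def sigmaC (k n : ℕ) : ℂ := ∑ d ∈ n.divisors, (d : ℂ) ^ k

/-- Eisenstein series `E₂(τ) = 1 - 24 Σ_{n≥1} σ₁(n) qⁿ`. -/
noncomputable def E₂ (τ : ℂ) : ℂ := 1 - 24 * ∑' n : ℕ, sigmaC 1 (n + 1) * qq τ ^ (n + 1)

/-- Eisenstein series `E₄(τ) = 1 + 240 Σ_{n≥1} σ₃(n) qⁿ`. -/
noncomputable def E₄ (τ : ℂ) : ℂ := 1 + 240 * ∑' n : ℕ, sigmaC 3 (n + 1) * qq τ ^ (n + 1)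

/-- Eisenstein series `E₆(τ) = 1 - 504 Σ_{n≥1} σ₅(n) qⁿ`. -/
noncomputable def E₆ (τ : ℂ) : ℂ := 1 - 504 * ∑' n : ℕ, sigmaC 5 (n + 1) * qq τ ^ (n + 1)

/-- Dedekind eta function `η(τ) = exp(πiτ/12) ∏_{n≥1} (1 - qⁿ)`. -/
noncomputable def η (τ : ℂ) : ℂ :=
  Complex.exp (Real.pi * Complex.I * τ / 12) * ∏' n : ℕ, (1 - qq τ ^ (n + 1))

/-- Theta function `θ(τ) = Σ_{n ∈ ℤ} q^{n²}`. -/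
noncomputable def θ (τ : ℂ) : ℂ := ∑' n : ℤ, qq τ ^ (n ^ 2)

/-- The character `χ₋₄`: `χ₋₄(d) = 1, -1, 0` according as `d ≡ 1, 3, 0/2 (mod 4)`. -/
noncomputable def χ₄ (d : ℕ) : ℂ := if d % 4 = 1 then 1 else if d % 4 = 3 then -1 else 0

/-- The character `χ₋₃`: `χ₋₃(d) = 1, -1, 0` according as `d ≡ 1, 2, 0 (mod 3)`. -/
noncomputable def χ₃ (d : ℕ) : ℂ := if d % 3 = 1 then 1 else if d % 3 = 2 then -1 else 0

/-- `E_{1,-4}(τ) = 1/4 + Σ_{n≥1} (Σ_{d∣n} χ₋₄(d)) qⁿ`. -/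
noncomputable def E₁₄ (τ : ℂ) : ℂ :=
  1 / 4 + ∑' n : ℕ, (∑ d ∈ (n + 1).divisors, χ₄ d) * qq τ ^ (n + 1)

/-- `E_{1,-3}(τ) = 1/6 + Σ_{n≥1} (Σ_{d∣n} χ₋₃(d)) qⁿ`. -/
noncomputable def E₁₃ (τ : ℂ) : ℂ :=
  1 / 6 + ∑' n : ℕ, (∑ d ∈ (n + 1).divisors, χ₃ d) * qq τ ^ (n + 1)

/-- `E_{2,2}(τ) = 2E₂(2τ) - E₂(τ)`. -/
noncomputable def E₂₂ (τ : ℂ) : ℂ := 2 * E₂ (2 * τ) - E₂ τ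

/-- `E_{2,4}(τ) = (4E₄(2τ) - E₄(τ))/3`. -/
noncomputable def E₂₄ (τ : ℂ) : ℂ := (4 * E₄ (2 * τ) - E₄ τ) / 3

/-- `E_{3,2}(τ) = (3E₂(3τ) - E₂(τ))/2`. -/
noncomputable def E₃₂ (τ : ℂ) : ℂ := (3 * E₂ (3 * τ) - E₂ τ) / 2

/-- `E_{3,4}(τ) = (9E₄(3τ) - E₄(τ))/8`. -/
noncomputable def E₃₄ (τ : ℂ) : ℂ := (9 * E₄ (3 * τ) - E₄ τ) / 8

/-- `E_{4,2}(τ) = (4E₂(4τ) - E₂(τ))/3`. -/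
noncomputable def E₄₂ (τ : ℂ) : ℂ := (4 * E₂ (4 * τ) - E₂ τ) / 3

/-- `E'_{4,2}(τ) = 4E₂(4τ) - 4E₂(2τ) + E₂(τ)`. -/
noncomputable def E₄₂' (τ : ℂ) : ℂ := 4 * E₂ (4 * τ) - 4 * E₂ (2 * τ) + E₂ τ

/-- `f_{1,j}(τ) = 2E₂(τ) - ((3+(-1)ʲi√3)/6)E₂(τ/2) - ((3-(-1)ʲi√3)/6)E₂((τ+1)/2)`. -/
noncomputable def f₁ (j : ℕ) (τ : ℂ) : ℂ :=
  2 * E₂ τ - ((3 + (-1 : ℂ) ^ j * Complex.I * Real.sqrt 3) / 6) * E₂ (τ / 2)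
    - ((3 - (-1 : ℂ) ^ j * Complex.I * Real.sqrt 3) / 6) * E₂ ((τ + 1) / 2)

/-- `g_{1,j}(τ) = (3/2)E₂(τ) - (1/4) Σ_{0≤m≤2, m≢j (mod 3)} E₂((τ+m)/3)`. -/
noncomputable def g₁ (j : ℕ) (τ : ℂ) : ℂ :=
  (3 / 2) * E₂ τ -
    (1 / 4) * ∑ m ∈ (Finset.range 3).filter (fun m => ¬ m % 3 = j % 3), E₂ ((τ + m) / 3)

/-- `f_{2,j}(τ) = 4E_{1,-4}(τ) + (-1)ʲ·2i·(E_{1,-4}(τ/2) - E_{1,-4}((τ+1)/2))`. -/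
noncomputable def f₂ (j : ℕ) (τ : ℂ) : ℂ :=
  4 * E₁₄ τ + (-1 : ℂ) ^ j * 2 * Complex.I * (E₁₄ (τ / 2) - E₁₄ ((τ + 1) / 2))

/-- `f_{3,j}(τ) = 6E_{1,-3}(2τ) + (-1)ʲ·i√3·(E_{1,-3}(τ/2) - E_{1,-3}((τ+1)/2))`. -/
noncomputable def f₃ (j : ℕ) (τ : ℂ) : ℂ :=
  6 * E₁₃ (2 * τ) +
    (-1 : ℂ) ^ j * Complex.I * Real.sqrt 3 * (E₁₃ (τ / 2) - E₁₃ ((τ + 1) / 2))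

/-- `f_{4,j}(τ) = θ(τ/2 - (-1)ʲ/4)`. -/
noncomputable def f₄ (j : ℕ) (τ : ℂ) : ℂ := θ (τ / 2 - (-1 : ℂ) ^ j / 4)

/-- `g_{4,j}(τ) = 2θ(2τ)² - θ((τ+j)/2)²`. -/
noncomputable def g₄ (j : ℕ) (τ : ℂ) : ℂ := 2 * θ (2 * τ) ^ 2 - θ ((τ + j) / 2) ^ 2

/-- `E_{3,-3,1}(τ) = -1/9 + Σ_{n≥1} (Σ_{d∣n} d²χ₋₃(d)) qⁿ`. -/
noncomputable def E₃₃₁ (τ : ℂ) : ℂ :=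
  -(1 / 9) + ∑' n : ℕ, (∑ d ∈ (n + 1).divisors, (d : ℂ) ^ 2 * χ₃ d) * qq τ ^ (n + 1)

/-- `E_{3,1,-3}(τ) = Σ_{n≥1} (Σ_{d∣n} d²χ₋₃(n/d)) qⁿ`. -/
noncomputable def E₃₁₃ (τ : ℂ) : ℂ :=
  ∑' n : ℕ, (∑ d ∈ (n + 1).divisors, (d : ℂ) ^ 2 * χ₃ ((n + 1) / d)) * qq τ ^ (n + 1)

open Filter Topology

lemma norm_pow_lt_one {q : ℂ} (hq : ‖q‖ < 1) {n : ℕ} (hn : n ≠ 0) : ‖q ^ n‖ < 1 := by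
  rw [norm_pow]; exact pow_lt_one₀ (norm_nonneg _) hq hn

lemma one_sub_pow_ne_zero {q : ℂ} (hq : ‖q‖ < 1) (n : ℕ) : 1 - q ^ (n + 1) ≠ 0 := by
  intro h
  have h2 := norm_pow_lt_one hq n.succ_ne_zero
  rw [← sub_eq_zero.mp h, norm_one] at h2
  exact lt_irrefl _ h2

/-- The Euler product `∏_{n ≥ 1} (1 - qⁿ)`. -/
noncomputable def eulerProd (q : ℂ) : ℂ := ∏' n : ℕ, (1 - q ^ (n + 1))

lemma eulerProd_ne_zero {q : ℂ} (hq : ‖q‖ < 1) : eulerProd q ≠ 0 := by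
  refine tprod_one_add_ne_zero_of_summable (f := fun n : ℕ ↦ -q ^ (n + 1)) (fun n ↦ ?_) ?_
  · simpa [sub_eq_add_neg] using one_sub_pow_ne_zero hq n
  · simpa using (summable_nat_add_iff 1).mpr (summable_geometric_of_lt_one (norm_nonneg _) hq)

lemma tendsto_prod_eulerProd {q : ℂ} (hq : ‖q‖ < 1) :
    Tendsto (fun n ↦ ∏ k ∈ Finset.range n, (1 - q ^ (k + 1))) atTop (𝓝 (eulerProd q)) :=
  (ModularForm.multipliable_one_sub_pow hq).hasProd.tendsto_prod_nat

/-- `1 / ∏_{k=1}^m (1 - qᵏ)`, extended by zero to negative `m`. -/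
noncomputable def qPochInv (q : ℂ) (m : ℤ) : ℂ :=
  if 0 ≤ m then (∏ k ∈ Finset.range m.toNat, (1 - q ^ (k + 1)))⁻¹ else 0

lemma qPochInv_sub_one {q : ℂ} (hq : ‖q‖ < 1) (m : ℤ) :
    qPochInv q (m - 1) = (1 - q ^ m) * qPochInv q m := by
  rcases lt_trichotomy m 0 with h | rfl | h
  · simp [qPochInv, not_le.mpr h, show ¬ (1 ≤ m) by lia]
  · simp [qPochInv]
  · obtain ⟨n, rfl⟩ : ∃ n : ℕ, m = n + 1 := ⟨(m - 1).toNat, by lia⟩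
    have h1 : ((n : ℤ) + 1).toNat = n + 1 := by lia
    have h2 : (0 : ℤ) ≤ n + 1 := by lia
    have h3 := one_sub_pow_ne_zero hq n
    rw [qPochInv, qPochInv, if_pos h2, add_sub_cancel_right, if_pos (by lia), h1,
      Int.toNat_natCast, Finset.prod_range_succ, mul_inv,
      show q ^ ((n : ℤ) + 1) = q ^ (n + 1) by exact_mod_cast zpow_natCast q (n + 1)]
    field_simp

lemma tendsto_qPochInv {q : ℂ} (hq : ‖q‖ < 1) :
    Tendsto (qPochInv q) atTop (𝓝 (eulerProd q)⁻¹) := by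
  have h : Tendsto (fun m : ℤ ↦ m.toNat) atTop atTop :=
    tendsto_atTop_atTop.mpr fun b ↦ ⟨b, fun a ha ↦ by lia⟩
  refine (((tendsto_prod_eulerProd hq).comp h).inv₀ (eulerProd_ne_zero hq)).congr' ?_
  filter_upwards [eventually_ge_atTop 0] with m hm
  simp [qPochInv, hm]

lemma exists_norm_qPochInv_le {q : ℂ} (hq : ‖q‖ < 1) : ∃ C, ∀ m, ‖qPochInv q m‖ ≤ C := by
  obtain ⟨C, hC⟩ := ((tendsto_qPochInv hq).comp tendsto_natCast_atTop_atTop).norm.bddAbove_range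
  refine ⟨C, fun m ↦ ?_⟩
  by_cases hm : 0 ≤ m
  · obtain ⟨n, rfl⟩ := Int.eq_ofNat_of_zero_le hm
    exact hC ⟨n, rfl⟩
  · simpa [qPochInv, hm] using (norm_nonneg _).trans (hC ⟨0, rfl⟩)

/-- Coefficient of `zʲ` in `∏_{k<n} (1 + z q^{2k+1}) (1 + z⁻¹ q^{2k+1})`. -/
noncomputable def tripleCoeff (q : ℂ) (n : ℕ) (j : ℤ) : ℂ :=
  q ^ (j ^ 2) * (∏ k ∈ Finset.range (2 * n), (1 - (q ^ 2) ^ (k + 1))) *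
    (qPochInv (q ^ 2) (n - j) * qPochInv (q ^ 2) (n + j))

lemma tripleCoeff_succ {q : ℂ} (hq0 : q ≠ 0) (hq : ‖q‖ < 1) (n : ℕ) (j : ℤ) :
    tripleCoeff q (n + 1) j = (1 + q ^ (4 * n + 2)) * tripleCoeff q n j +
      q ^ (2 * n + 1) * (tripleCoeff q n (j - 1) + tripleCoeff q n (j + 1)) := by
  have hq2 := norm_pow_lt_one hq two_ne_zero
  set a : ℤ := n + 1 - j with ha
  set b : ℤ := n + 1 + j with hb
  have r := qPochInv_sub_one hq2
  have e1 : qPochInv (q ^ 2) (n - j) = (1 - (q ^ 2) ^ a) * qPochInv (q ^ 2) a := by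
    rw [← r]; congr 1; lia
  have e2 : qPochInv (q ^ 2) (n + j) = (1 - (q ^ 2) ^ b) * qPochInv (q ^ 2) b := by
    rw [← r]; congr 1; lia
  have e3 : qPochInv (q ^ 2) (n - (j + 1)) =
      (1 - (q ^ 2) ^ a / q ^ 2) * ((1 - (q ^ 2) ^ a) * qPochInv (q ^ 2) a) := by
    rw [← r, div_eq_mul_inv, ← zpow_sub_one₀ (pow_ne_zero 2 hq0), ← r]; congr 1; lia
  have e4 : qPochInv (q ^ 2) (n + (j - 1)) =
      (1 - (q ^ 2) ^ b / q ^ 2) * ((1 - (q ^ 2) ^ b) * qPochInv (q ^ 2) b) := by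
    rw [← r, div_eq_mul_inv, ← zpow_sub_one₀ (pow_ne_zero 2 hq0), ← r]; congr 1; lia
  have e5 : (n : ℤ) - (j - 1) = a := by lia
  have e6 : (n : ℤ) + (j + 1) = b := by lia
  have e7 : ((n + 1 : ℕ) : ℤ) - j = a := by push_cast; lia
  have e8 : ((n + 1 : ℕ) : ℤ) + j = b := by push_cast; lia
  have p1 : q ^ (2 * n + 1) * q ^ ((j - 1) ^ 2) = q ^ (j ^ 2) * (q ^ 2) ^ a := by
    rw [← zpow_natCast q 2, ← zpow_natCast q (2 * n + 1), ← zpow_mul, ← zpow_add₀ hq0,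
      ← zpow_add₀ hq0]
    congr 1; push_cast; rw [ha]; ring
  have p2 : q ^ (2 * n + 1) * q ^ ((j + 1) ^ 2) = q ^ (j ^ 2) * (q ^ 2) ^ b := by
    rw [← zpow_natCast q 2, ← zpow_natCast q (2 * n + 1), ← zpow_mul, ← zpow_add₀ hq0,
      ← zpow_add₀ hq0]
    congr 1; push_cast; rw [hb]; ring
  have p3 : (q ^ 2) ^ (2 * n + 1 + 1) = (q ^ 2) ^ a * (q ^ 2) ^ b := by
    rw [← zpow_add₀ (pow_ne_zero 2 hq0), ← zpow_natCast]
    congr 1; push_cast; lia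
  have p4 : (q ^ 2) ^ (2 * n + 1) = (q ^ 2) ^ a * (q ^ 2) ^ b / q ^ 2 := by
    rw [← p3, pow_succ _ (2 * n + 1)]; field_simp
  have p5 : q ^ (4 * n + 2) = (q ^ 2) ^ a * (q ^ 2) ^ b / q ^ 2 := by
    rw [← p4]; ring
  simp only [tripleCoeff]
  rw [e1, e2, e3, e4, e5, e6, e7, e8, p5, show 2 * (n + 1) = 2 * n + 1 + 1 by ring,
    Finset.prod_range_succ, Finset.prod_range_succ, p3, p4]
  generalize (q ^ 2) ^ a = x at *
  generalize (q ^ 2) ^ b = y at *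
  generalize qPochInv (q ^ 2) a = u at *
  generalize qPochInv (q ^ 2) b = v at *
  generalize ∏ k ∈ Finset.range (2 * n), (1 - (q ^ 2) ^ (k + 1)) = P at *
  linear_combination (-P * (1 - y / q ^ 2) * (1 - y) * u * v) * p1
    - (P * (1 - x / q ^ 2) * (1 - x) * u * v) * p2

lemma hasSum_tripleCoeff {q z : ℂ} (hq0 : q ≠ 0) (hq : ‖q‖ < 1) (hz : z ≠ 0) (n : ℕ) :
    HasSum (fun j : ℤ ↦ tripleCoeff q n j * z ^ j)
      (∏ k ∈ Finset.range n, (1 + z * q ^ (2 * k + 1)) * (1 + z⁻¹ * q ^ (2 * k + 1))) := by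
  induction n with
  | zero =>
    have h0 : tripleCoeff q 0 0 * z ^ (0 : ℤ) = 1 := by simp [tripleCoeff, qPochInv]
    rw [Finset.prod_range_zero, ← h0]
    refine hasSum_single (0 : ℤ) fun j hj ↦ ?_
    rcases lt_or_gt_of_ne hj with h | h <;> simp [tripleCoeff, qPochInv, h]
  | succ n ih =>
    have h1 : HasSum (fun j : ℤ ↦ tripleCoeff q n (j - 1) * z ^ j) _ :=
      ((Equiv.subRight (1 : ℤ)).hasSum_iff.mpr (ih.mul_left z)).congr_fun fun j ↦ ?_
    have h2 : HasSum (fun j : ℤ ↦ tripleCoeff q n (j + 1) * z ^ j) _ :=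
      ((Equiv.addRight (1 : ℤ)).hasSum_iff.mpr (ih.mul_left z⁻¹)).congr_fun fun j ↦ ?_
    rotate_left
    · simp only [Function.comp_apply, Equiv.coe_addRight, zpow_add_one₀ hz]
      field_simp
    · simp only [Function.comp_apply, Equiv.subRight_apply, zpow_sub_one₀ hz]
      field_simp
    convert! (ih.mul_left (1 + q ^ (4 * n + 2))).add ((h1.add h2).mul_left (q ^ (2 * n + 1)))
      using 1
    · ext j
      rw [tripleCoeff_succ hq0 hq]
      ring
    · rw [Finset.prod_range_succ]
      field_simp
      ring

lemma summable_pow_sq_mul {q z : ℂ} (hq0 : q ≠ 0) (hq : ‖q‖ < 1) (hz : z ≠ 0) :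
    Summable fun j : ℤ ↦ q ^ (j ^ 2) * z ^ j := by
  have h := (summable_jacobiTheta₂_term_iff (Complex.log z / (2 * Real.pi * Complex.I))
    (Complex.log q / (Real.pi * Complex.I))).mpr ?_
  · refine h.congr fun j ↦ ?_
    have hpi : (Real.pi : ℂ) ≠ 0 := by exact_mod_cast Real.pi_ne_zero
    rw [jacobiTheta₂_term, Complex.exp_add, mul_comm]
    congr 1
    · rw [show (Real.pi : ℂ) * I * j ^ 2 * (log q / (Real.pi * I)) = ((j ^ 2 : ℤ) : ℂ) * log q by
        push_cast; field_simp [I_ne_zero], Complex.exp_int_mul, Complex.exp_log hq0]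
    · rw [show 2 * (Real.pi : ℂ) * I * j * (log z / (2 * Real.pi * I)) = (j : ℂ) * log z by
        field_simp [I_ne_zero], Complex.exp_int_mul, Complex.exp_log hz]
  · rw [show Complex.log q / (Real.pi * I) = ((Real.pi⁻¹ : ℝ) : ℂ) * (-I * Complex.log q) by
      push_cast; field_simp [I_ne_zero]; simp, Complex.im_ofReal_mul]
    refine mul_pos (inv_pos.mpr Real.pi_pos) ?_
    simpa [Complex.log_re] using Real.log_neg (norm_pos_iff.mpr hq0) hq

lemma multipliable_one_add_mul_pow {q : ℂ} (hq : ‖q‖ < 1) (z : ℂ) :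
    Multipliable fun k : ℕ ↦ 1 + z * q ^ (2 * k + 1) := by
  refine multipliable_one_add_of_summable ?_
  have h : Summable fun k : ℕ ↦ ‖q‖ ^ k := summable_geometric_of_lt_one (norm_nonneg _) hq
  have h2 := h.comp_injective (i := fun k : ℕ ↦ 2 * k + 1) fun a b h ↦ by simpa using h
  simpa using h2.mul_left ‖z‖

/-- The Jacobi triple product identity. -/
theorem jacobi_triple_product {q z : ℂ} (hq0 : q ≠ 0) (hq : ‖q‖ < 1) (hz : z ≠ 0) :
    ∑' j : ℤ, q ^ (j ^ 2) * z ^ j = eulerProd (q ^ 2) *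
      ((∏' k : ℕ, (1 + z * q ^ (2 * k + 1))) * ∏' k : ℕ, (1 + z⁻¹ * q ^ (2 * k + 1))) := by
  have hq2 := norm_pow_lt_one hq two_ne_zero
  have hF := eulerProd_ne_zero hq2
  have hprod := ((tendsto_prod_eulerProd hq2).comp
    (tendsto_id.const_mul_atTop' (show 0 < 2 by simp)))
  obtain ⟨C, hC⟩ := exists_norm_qPochInv_le hq2
  obtain ⟨K, hK⟩ := hprod.norm.bddAbove_range
  have h1 : Tendsto (fun n ↦ ∑' j : ℤ, tripleCoeff q n j * z ^ j) atTop
      (𝓝 (∑' j : ℤ, (eulerProd (q ^ 2))⁻¹ * (q ^ (j ^ 2) * z ^ j))) := by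
    refine tendsto_tsum_of_dominated_convergence
      (((summable_pow_sq_mul hq0 hq hz).norm.mul_left (K * (C * C)))) (fun j ↦ ?_)
      (.of_forall fun n j ↦ ?_)
    · have h2 : Tendsto (fun n : ℕ ↦ (n : ℤ) - j) atTop atTop :=
        tendsto_atTop_add_const_right _ _ tendsto_natCast_atTop_atTop
      have h3 : Tendsto (fun n : ℕ ↦ (n : ℤ) + j) atTop atTop :=
        tendsto_atTop_add_const_right _ _ tendsto_natCast_atTop_atTop
      have := (((hprod.const_mul (q ^ (j ^ 2))).mul (((tendsto_qPochInv hq2).comp h2).mul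
        ((tendsto_qPochInv hq2).comp h3))).mul_const (z ^ j))
      convert! this using 2
      field_simp
    · have h0 : 0 ≤ C := (norm_nonneg _).trans (hC 0)
      have h2 : ‖∏ k ∈ Finset.range (2 * n), (1 - (q ^ 2) ^ (k + 1))‖ ≤ K := hK ⟨n, rfl⟩
      have h3 : 0 ≤ K := (norm_nonneg _).trans h2
      calc ‖tripleCoeff q n j * z ^ j‖
          = (‖∏ k ∈ Finset.range (2 * n), (1 - (q ^ 2) ^ (k + 1))‖ *
            (‖qPochInv (q ^ 2) (n - j)‖ * ‖qPochInv (q ^ 2) (n + j)‖)) *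
            ‖q ^ (j ^ 2) * z ^ j‖ := by
            simp only [tripleCoeff, norm_mul]; ring
        _ ≤ K * (C * C) * ‖q ^ (j ^ 2) * z ^ j‖ := by
            gcongr
            · exact hC _
            · exact hC _
  have h4 := ((multipliable_one_add_mul_pow hq z).hasProd.mul
    (multipliable_one_add_mul_pow hq z⁻¹).hasProd).tendsto_prod_nat
  simp_rw [(hasSum_tripleCoeff hq0 hq hz _).tsum_eq] at h1
  have h5 := tendsto_nhds_unique h1 h4
  rw [tsum_mul_left] at h5
  rw [← h5]
  field_simp

lemma eulerProd_eq_odd_mul {q : ℂ} (hq : ‖q‖ < 1) :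
    eulerProd q = (∏' k : ℕ, (1 + -1 * q ^ (2 * k + 1))) * eulerProd (q ^ 2) := by
  have h1 := multipliable_one_add_mul_pow hq (-1)
  have h2 := ModularForm.multipliable_one_sub_pow (norm_pow_lt_one hq two_ne_zero)
  have h3 := tprod_even_mul_odd (f := fun n : ℕ ↦ 1 - q ^ (n + 1))
    (h1.congr fun k ↦ by ring) (h2.congr fun k ↦ by ring)
  rw [eulerProd, eulerProd, ← h3]
  congr 1 <;> refine tprod_congr fun k ↦ by ring

lemma tprod_one_add_odd_mul {q : ℂ} (hq : ‖q‖ < 1) :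
    (∏' k : ℕ, (1 + 1 * q ^ (2 * k + 1))) * (eulerProd q * eulerProd (q ^ 4)) =
      eulerProd (q ^ 2) ^ 2 := by
  have h : (∏' k : ℕ, (1 + 1 * q ^ (2 * k + 1))) * (∏' k : ℕ, (1 + -1 * q ^ (2 * k + 1))) =
      ∏' k : ℕ, (1 + -1 * (q ^ 2) ^ (2 * k + 1)) := by
    rw [← (multipliable_one_add_mul_pow hq 1).tprod_mul (multipliable_one_add_mul_pow hq (-1))]
    exact tprod_congr fun k ↦ by ring
  have h2 := eulerProd_eq_odd_mul (norm_pow_lt_one hq two_ne_zero)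
  rw [← pow_mul, ← h] at h2
  rw [eulerProd_eq_odd_mul hq, sq (eulerProd (q ^ 2))]
  nth_rw 3 [h2]
  ring

lemma multipliable_one_add_pow {q : ℂ} (hq : ‖q‖ < 1) :
    Multipliable fun k : ℕ ↦ 1 + q ^ (k + 1) := by
  refine multipliable_one_add_of_summable ?_
  simpa using (summable_nat_add_iff 1).mpr (summable_geometric_of_lt_one (norm_nonneg _) hq)

lemma tprod_one_add_mul_eulerProd {q : ℂ} (hq : ‖q‖ < 1) :
    (∏' k : ℕ, (1 + q ^ (k + 1))) * eulerProd q = eulerProd (q ^ 2) := by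
  rw [eulerProd, eulerProd, ← (multipliable_one_add_pow hq).tprod_mul
    (ModularForm.multipliable_one_sub_pow hq)]
  exact tprod_congr fun k ↦ by ring

/-- The series `∑ q^{j²}` over the integers. -/
noncomputable def squareSeries (q : ℂ) : ℂ := ∑' j : ℤ, q ^ (j ^ 2)

/-- The series `∑ q^{j² + j}` over the integers. -/
noncomputable def pronicSeries (q : ℂ) : ℂ := ∑' j : ℤ, q ^ (j ^ 2 + j)

lemma squareSeries_mul {q : ℂ} (hq0 : q ≠ 0) (hq : ‖q‖ < 1) :
    squareSeries q * (eulerProd q ^ 2 * eulerProd (q ^ 4) ^ 2) = eulerProd (q ^ 2) ^ 5 := by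
  have h := jacobi_triple_product hq0 hq one_ne_zero
  simp only [one_zpow, mul_one, inv_one] at h
  rw [squareSeries, h]
  linear_combination eulerProd (q ^ 2) * ((∏' k : ℕ, (1 + 1 * q ^ (2 * k + 1))) *
    (eulerProd q * eulerProd (q ^ 4)) + eulerProd (q ^ 2) ^ 2) * tprod_one_add_odd_mul hq

lemma squareSeries_neg_mul {q : ℂ} (hq0 : q ≠ 0) (hq : ‖q‖ < 1) :
    squareSeries (-q) * eulerProd (q ^ 2) = eulerProd q ^ 2 := by
  have h := jacobi_triple_product (neg_ne_zero.mpr hq0) (by rwa [norm_neg]) one_ne_zero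
  have h1 : ∏' k : ℕ, (1 + 1 * (-q) ^ (2 * k + 1)) = ∏' k : ℕ, (1 + -1 * q ^ (2 * k + 1)) :=
    tprod_congr fun k ↦ by rw [Odd.neg_pow ⟨k, rfl⟩]; ring
  simp only [one_zpow, mul_one, inv_one, neg_sq, h1] at h
  rw [squareSeries, h, eulerProd_eq_odd_mul hq]
  ring

lemma pronicSeries_mul {q : ℂ} (hq0 : q ≠ 0) (hq : ‖q‖ < 1) :
    pronicSeries q * eulerProd (q ^ 2) = 2 * eulerProd (q ^ 4) ^ 2 := by
  have hq2 := norm_pow_lt_one hq two_ne_zero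
  have h := jacobi_triple_product hq0 hq hq0
  have h1 : ∏' k : ℕ, (1 + q * q ^ (2 * k + 1)) = ∏' k : ℕ, (1 + (q ^ 2) ^ (k + 1)) :=
    tprod_congr fun k ↦ by ring
  have h2 : ∏' k : ℕ, (1 + q⁻¹ * q ^ (2 * k + 1)) = 2 * ∏' k : ℕ, (1 + (q ^ 2) ^ (k + 1)) := by
    have e (k : ℕ) : 1 + q⁻¹ * q ^ (2 * (k + 1) + 1) = 1 + (q ^ 2) ^ (k + 1) := by
      field_simp; ring
    rw [tprod_eq_zero_mul' ((multipliable_one_add_pow hq2).congr fun k ↦ (e k).symm),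
      tprod_congr e]
    simp [hq0, one_add_one_eq_two]
  have h3 := tprod_one_add_mul_eulerProd hq2
  rw [← pow_mul] at h3
  simp only [← zpow_add₀ hq0, h1, h2] at h
  rw [pronicSeries, h]
  linear_combination 2 * ((∏' k : ℕ, (1 + (q ^ 2) ^ (k + 1))) * eulerProd (q ^ 2) +
    eulerProd (q ^ 4)) * h3

/-- The pairs of integers split into those with even and those with odd coordinate sum. -/
noncomputable def parityEquiv : (ℤ × ℤ) ⊕ (ℤ × ℤ) ≃ ℤ × ℤ :=
  Equiv.ofBijective
    (Sum.elim (fun p ↦ (p.1 + p.2, p.1 - p.2)) (fun p ↦ (p.1 + p.2 + 1, p.1 - p.2))) <| by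
    constructor
    · rintro (⟨a, b⟩ | ⟨a, b⟩) (⟨c, d⟩ | ⟨c, d⟩) h <;>
        simp only [Sum.elim_inl, Sum.elim_inr, Prod.mk.injEq] at h <;>
        simp <;> lia
    · rintro ⟨m, n⟩
      rcases Int.even_or_odd' (m + n) with ⟨k, hk | hk⟩
      · exact ⟨.inl (k, m - k), by simp; lia⟩
      · exact ⟨.inr (k, m - k - 1), by simp; lia⟩

lemma parityEquiv_inl (p : ℤ × ℤ) : parityEquiv (.inl p) = (p.1 + p.2, p.1 - p.2) := rfl

lemma parityEquiv_inr (p : ℤ × ℤ) : parityEquiv (.inr p) = (p.1 + p.2 + 1, p.1 - p.2) := rfl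

lemma squareSeries_sq {q : ℂ} (hq0 : q ≠ 0) (hq : ‖q‖ < 1) :
    squareSeries q ^ 2 = squareSeries (q ^ 2) ^ 2 + q * pronicSeries (q ^ 2) ^ 2 := by
  have hq2 := norm_pow_lt_one hq two_ne_zero
  have hq20 := pow_ne_zero 2 hq0
  have hs : Summable fun j : ℤ ↦ ‖q ^ (j ^ 2)‖ := by
    simpa using (summable_pow_sq_mul hq0 hq one_ne_zero).norm
  have hs2 : Summable fun j : ℤ ↦ ‖(q ^ 2) ^ (j ^ 2)‖ := by
    simpa using (summable_pow_sq_mul hq20 hq2 one_ne_zero).norm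
  have hp2 : Summable fun j : ℤ ↦ ‖(q ^ 2) ^ (j ^ 2 + j)‖ := by
    simpa only [zpow_add₀ hq20] using (summable_pow_sq_mul hq20 hq2 hq20).norm
  have h := (summable_mul_of_summable_norm hs hs).hasSum
  rw [← tsum_mul_tsum_of_summable_norm hs hs, ← parityEquiv.hasSum_iff] at h
  have h1 := (summable_mul_of_summable_norm hs2 hs2).hasSum
  rw [← tsum_mul_tsum_of_summable_norm hs2 hs2] at h1
  have h2 := (summable_mul_of_summable_norm hp2 hp2).hasSum.mul_left q
  rw [← tsum_mul_tsum_of_summable_norm hp2 hp2] at h2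
  have h3 := HasSum.sum (f := (fun p : ℤ × ℤ ↦ q ^ (p.1 ^ 2) * q ^ (p.2 ^ 2)) ∘ parityEquiv)
    (h1.congr_fun fun p ↦ ?_) (h2.congr_fun fun p ↦ ?_)
  · rw [sq, sq, sq (pronicSeries _)]
    exact h.unique h3
  · simp only [Function.comp_apply, parityEquiv_inl]
    rw [← zpow_natCast q 2, ← zpow_mul, ← zpow_mul, ← zpow_add₀ hq0, ← zpow_add₀ hq0]
    congr 1; push_cast; ring
  · simp only [Function.comp_apply, parityEquiv_inr]
    rw [← zpow_natCast q 2, ← zpow_mul, ← zpow_mul, ← zpow_add₀ hq0, ← zpow_add₀ hq0,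
      ← zpow_one_add₀ hq0]
    congr 1; push_cast; ring

lemma qq_natCast_mul (c : ℕ) (τ : ℂ) : qq (c * τ) = qq τ ^ c := by
  rw [qq, qq, ← Complex.exp_nat_mul]
  congr 1; ring

lemma qq_ne_zero (τ : ℂ) : qq τ ≠ 0 := Complex.exp_ne_zero _

lemma norm_qq_lt_one {τ : ℂ} (hτ : 0 < τ.im) : ‖qq τ‖ < 1 :=
  UpperHalfPlane.norm_exp_two_pi_I_lt_one ⟨τ, hτ⟩

lemma η_natCast_mul (c : ℕ) (τ : ℂ) :
    η (c * τ) = Complex.exp (Real.pi * I * τ / 12) ^ c * eulerProd (qq τ ^ c) := by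
  rw [η, eulerProd, qq_natCast_mul, ← Complex.exp_nat_mul]
  congr 2; ring

lemma η_eq_eta : η = ModularForm.eta := by
  ext τ
  simp only [η, ModularForm.eta, qq, ModularForm.eta_q_eq_pow, Function.Periodic.qParam]
  congr 2
  push_cast
  ring

lemma η_ne_zero {τ : ℂ} (hτ : 0 < τ.im) : η τ ≠ 0 := by
  rw [η_eq_eta]; exact ModularForm.eta_ne_zero hτ

lemma E₂_eq_E2 (τ : UpperHalfPlane) : E₂ τ = EisensteinSeries.E2 τ := by
  rw [EisensteinSeries.E2_eq_tsum_cexp, E₂,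
    tsum_pnat_eq_tsum_succ (f := fun n : ℕ ↦ (ArithmeticFunction.sigma 1 n : ℂ) *
      Complex.exp (2 * Real.pi * I * τ) ^ n)]
  simp [sigmaC, qq, ArithmeticFunction.sigma_apply]

lemma hasDerivAt_η {τ : ℂ} (hτ : 0 < τ.im) :
    HasDerivAt η (Real.pi * I / 12 * E₂ τ * η τ) τ := by
  have h := ModularForm.logDeriv_eta_eq_E2 ⟨τ, hτ⟩
  rw [← E₂_eq_E2, logDeriv_apply, div_eq_iff (ModularForm.eta_ne_zero hτ)] at h
  rw [η_eq_eta]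
  have h2 := (ModularForm.differentiableAt_eta_of_mem_upperHalfPlaneSet hτ).hasDerivAt
  rwa [show deriv ModularForm.eta τ = _ from h] at h2

lemma natCast_mul_im_pos {τ : ℂ} (hτ : 0 < τ.im) {c : ℕ} (hc : 0 < c) :
    0 < ((c : ℂ) * τ).im := by
  rw [← Complex.ofReal_natCast, Complex.im_ofReal_mul]; positivity

lemma hasDerivAt_η_natCast_mul {τ : ℂ} (hτ : 0 < τ.im) {c : ℕ} (hc : 0 < c) :
    HasDerivAt (fun z ↦ η (c * z))
      (Real.pi * I / 12 * (c * E₂ (c * τ)) * η (c * τ)) τ := by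
  convert! (hasDerivAt_η (natCast_mul_im_pos hτ hc)).comp τ
    ((hasDerivAt_id τ).const_mul (c : ℂ)) using 1
  ring

lemma η_theta_three_sq {τ : ℂ} (hτ : 0 < τ.im) :
    η (2 * τ) ^ 10 / (η τ ^ 4 * η (4 * τ) ^ 4) =
      η (4 * τ) ^ 10 / (η (2 * τ) ^ 4 * η (8 * τ) ^ 4) + 4 * η (8 * τ) ^ 4 / η (4 * τ) ^ 2 ∧
    η τ ^ 4 / η (2 * τ) ^ 2 =
      η (4 * τ) ^ 10 / (η (2 * τ) ^ 4 * η (8 * τ) ^ 4) - 4 * η (8 * τ) ^ 4 / η (4 * τ) ^ 2 := by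
  have e1 := η_natCast_mul 1 τ
  have e2 := η_natCast_mul 2 τ
  have e4 := η_natCast_mul 4 τ
  have e8 := η_natCast_mul 8 τ
  push_cast [one_mul, pow_one] at e1 e2 e4 e8
  have hq := norm_qq_lt_one hτ
  have hq0 := qq_ne_zero τ
  have hh : qq τ = Complex.exp (Real.pi * I * τ / 12) ^ 24 := by
    rw [qq, ← Complex.exp_nat_mul]; congr 1; push_cast; ring
  have h0 : Complex.exp (Real.pi * I * τ / 12) ≠ 0 := Complex.exp_ne_zero _
  have f1 := eulerProd_ne_zero hq
  have f2 := eulerProd_ne_zero (norm_pow_lt_one hq (n := 2) (by simp))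
  have f4 := eulerProd_ne_zero (norm_pow_lt_one hq (n := 4) (by simp))
  have f8 := eulerProd_ne_zero (norm_pow_lt_one hq (n := 8) (by simp))
  have a1 := squareSeries_mul hq0 hq
  have a2 := squareSeries_neg_mul hq0 hq
  have a3 := squareSeries_mul (pow_ne_zero 2 hq0) (norm_pow_lt_one hq two_ne_zero)
  have a4 := pronicSeries_mul (pow_ne_zero 2 hq0) (norm_pow_lt_one hq two_ne_zero)
  have b1 := squareSeries_sq hq0 hq
  have b2 := squareSeries_sq (neg_ne_zero.mpr hq0) (by rwa [norm_neg])
  norm_num only [← pow_mul] at a3 a4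
  rw [neg_sq] at b2
  rw [e1, e2, e4, e8]
  rw [← eq_div_iff (by positivity)] at a1 a2 a3 a4
  rw [a1, a3, a4] at b1
  rw [a2, a3, a4] at b2
  generalize Complex.exp (Real.pi * I * τ / 12) = h at *
  generalize eulerProd (qq τ) = F1 at *
  generalize eulerProd (qq τ ^ 2) = F2 at *
  generalize eulerProd (qq τ ^ 4) = F4 at *
  generalize eulerProd (qq τ ^ 8) = F8 at *
  rw [hh] at b1 b2
  have c1 : (h ^ 2 * F2) ^ 10 / ((h * F1) ^ 4 * (h ^ 4 * F4) ^ 4) =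
    (F2 ^ 5 / (F1 ^ 2 * F4 ^ 2)) ^ 2 := by field_simp
  have c2 : (h * F1) ^ 4 / (h ^ 2 * F2) ^ 2 = (F1 ^ 2 / F2) ^ 2 := by field_simp
  have c3 : (h ^ 4 * F4) ^ 10 / ((h ^ 2 * F2) ^ 4 * (h ^ 8 * F8) ^ 4) =
    (F4 ^ 5 / (F2 ^ 2 * F8 ^ 2)) ^ 2 := by field_simp
  have c4 : 4 * (h ^ 8 * F8) ^ 4 / (h ^ 4 * F4) ^ 2 =
    h ^ 24 * (2 * F8 ^ 2 / F4) ^ 2 := by field_simp; ring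
  rw [c1, c2, c3, c4, b1, b2]
  exact ⟨rfl, by ring⟩

/-- The quotient `θ₂ / θ₃` of theta constants. -/
noncomputable def thetaRatio (τ : ℂ) : ℂ := 2 * η (4 * τ) ^ 4 * η τ ^ 2 / η (2 * τ) ^ 6

/-- The quotient `θ₄ / θ₃` of theta constants. -/
noncomputable def thetaCoRatio (τ : ℂ) : ℂ := η τ ^ 4 * η (4 * τ) ^ 2 / η (2 * τ) ^ 6

lemma hasDerivAt_thetaRatio {τ : ℂ} (hτ : 0 < τ.im) :
    HasDerivAt thetaRatio
      (Real.pi * I / 4 * (E₄₂ τ + E₄₂' τ) * thetaRatio τ) τ := by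
  have d1 := hasDerivAt_η hτ
  have d2 := hasDerivAt_η_natCast_mul hτ (c := 2) (by simp)
  have d4 := hasDerivAt_η_natCast_mul hτ (c := 4) (by simp)
  have n2 := η_ne_zero (natCast_mul_im_pos hτ (c := 2) (by simp))
  push_cast at d2 d4 n2
  convert! (((d4.fun_pow 4).const_mul 2).fun_mul (d1.fun_pow 2)).fun_div (d2.fun_pow 6)
    (pow_ne_zero 6 n2) using 1
  rw [thetaRatio, E₄₂, E₄₂']
  push_cast
  field_simp
  ring

lemma hasDerivAt_thetaCoRatio {τ : ℂ} (hτ : 0 < τ.im) :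
    HasDerivAt thetaCoRatio
      (-(Real.pi * I / 4 * (E₄₂ τ - E₄₂' τ) * thetaCoRatio τ)) τ := by
  have d1 := hasDerivAt_η hτ
  have d2 := hasDerivAt_η_natCast_mul hτ (c := 2) (by simp)
  have d4 := hasDerivAt_η_natCast_mul hτ (c := 4) (by simp)
  have n2 := η_ne_zero (natCast_mul_im_pos hτ (c := 2) (by simp))
  push_cast at d2 d4 n2
  convert! ((d1.fun_pow 4).fun_mul (d4.fun_pow 2)).fun_div (d2.fun_pow 6)
    (pow_ne_zero 6 n2) using 1
  rw [thetaCoRatio, E₄₂, E₄₂']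
  push_cast
  field_simp
  ring

/-- Jacobi's quartic identity `θ₃⁴ = θ₄⁴ + θ₂⁴` in terms of eta quotients. -/
lemma η_quartic {τ : ℂ} (hτ : 0 < τ.im) :
    η (2 * τ) ^ 24 = (η τ * η (4 * τ)) ^ 8 * (η τ ^ 8 + 16 * η (4 * τ) ^ 8) := by
  obtain ⟨h1, h2⟩ := η_theta_three_sq hτ
  have n1 := η_ne_zero hτ
  have n2 := η_ne_zero (natCast_mul_im_pos hτ (c := 2) (by simp))
  have n4 := η_ne_zero (natCast_mul_im_pos hτ (c := 4) (by simp))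
  have n8 := η_ne_zero (natCast_mul_im_pos hτ (c := 8) (by simp))
  push_cast at n2 n4 n8
  generalize η τ = e1 at *
  generalize η (2 * τ) = e2 at *
  generalize η (4 * τ) = e4 at *
  generalize η (8 * τ) = e8 at *
  have h3 : (e2 ^ 10 / (e1 ^ 4 * e4 ^ 4)) ^ 2 - (e1 ^ 4 / e2 ^ 2) ^ 2 =
      16 * e4 ^ 8 / e2 ^ 4 := by
    rw [h1, h2]; field_simp; ring
  field_simp at h3
  linear_combination h3

lemma eventually_im_pos {τ : ℂ} (hτ : 0 < τ.im) : ∀ᶠ z in 𝓝 τ, 0 < z.im :=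
  (isOpen_lt continuous_const Complex.continuous_im).mem_nhds hτ

lemma one_add_thetaRatio_two_mul_sq {τ : ℂ} (hτ : 0 < τ.im) :
    1 + thetaRatio (2 * τ) ^ 2 = η (2 * τ) ^ 10 / (η τ ^ 4 * η (4 * τ) ^ 4) *
      (η (2 * τ) ^ 4 * η (8 * τ) ^ 4) / η (4 * τ) ^ 10 := by
  have n2 := η_ne_zero (natCast_mul_im_pos hτ (c := 2) (by simp))
  have n4 := η_ne_zero (natCast_mul_im_pos hτ (c := 4) (by simp))
  have n8 := η_ne_zero (natCast_mul_im_pos hτ (c := 8) (by simp))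
  push_cast at n2 n4 n8
  rw [(η_theta_three_sq hτ).1, thetaRatio, show 4 * (2 * τ) = 8 * τ by ring,
    show 2 * (2 * τ) = 4 * τ by ring]
  generalize η (2 * τ) = e2 at *
  generalize η (4 * τ) = e4 at *
  generalize η (8 * τ) = e8 at *
  field_simp
  ring

lemma one_sub_thetaRatio_two_mul_sq {τ : ℂ} (hτ : 0 < τ.im) :
    1 - thetaRatio (2 * τ) ^ 2 = η τ ^ 4 / η (2 * τ) ^ 2 *
      (η (2 * τ) ^ 4 * η (8 * τ) ^ 4) / η (4 * τ) ^ 10 := by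
  have n2 := η_ne_zero (natCast_mul_im_pos hτ (c := 2) (by simp))
  have n4 := η_ne_zero (natCast_mul_im_pos hτ (c := 4) (by simp))
  have n8 := η_ne_zero (natCast_mul_im_pos hτ (c := 8) (by simp))
  push_cast at n2 n4 n8
  rw [(η_theta_three_sq hτ).2, thetaRatio, show 4 * (2 * τ) = 8 * τ by ring,
    show 2 * (2 * τ) = 4 * τ by ring]
  generalize η (2 * τ) = e2 at *
  generalize η (4 * τ) = e4 at *
  generalize η (8 * τ) = e8 at *
  field_simp
  ring

lemma thetaRatio_sq_mul {τ : ℂ} (hτ : 0 < τ.im) :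
    thetaRatio τ ^ 2 * (1 + thetaRatio (2 * τ) ^ 2) = 2 * thetaRatio (2 * τ) := by
  have n1 := η_ne_zero hτ
  have n2 := η_ne_zero (natCast_mul_im_pos hτ (c := 2) (by simp))
  have n4 := η_ne_zero (natCast_mul_im_pos hτ (c := 4) (by simp))
  push_cast at n2 n4
  rw [one_add_thetaRatio_two_mul_sq hτ, thetaRatio, thetaRatio, show 4 * (2 * τ) = 8 * τ by ring,
    show 2 * (2 * τ) = 4 * τ by ring]
  generalize η τ = e1 at *
  generalize η (2 * τ) = e2 at *
  generalize η (4 * τ) = e4 at *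
  generalize η (8 * τ) = e8 at *
  field_simp

lemma thetaRatio_ne_zero {τ : ℂ} (hτ : 0 < τ.im) : thetaRatio τ ≠ 0 := by
  have n1 := η_ne_zero hτ
  have n2 := η_ne_zero (natCast_mul_im_pos hτ (c := 2) (by simp))
  have n4 := η_ne_zero (natCast_mul_im_pos hτ (c := 4) (by simp))
  push_cast at n2 n4
  simp [thetaRatio, n1, n2, n4]

lemma pi_mul_I_ne_zero : (Real.pi : ℂ) * I ≠ 0 :=
  mul_ne_zero (by exact_mod_cast Real.pi_ne_zero) I_ne_zero

lemma E₄₂_add_mul_thetaRatio {τ : ℂ} (hτ : 0 < τ.im) :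
    (E₄₂ τ + E₄₂' τ) * (1 + thetaRatio (2 * τ) ^ 2) =
      (E₄₂ (2 * τ) + E₄₂' (2 * τ)) * (1 - thetaRatio (2 * τ) ^ 2) := by
  have hτ2 : 0 < (2 * τ).im := by simpa using natCast_mul_im_pos hτ (c := 2) (by simp)
  have d1 := hasDerivAt_thetaRatio hτ
  have d2 : HasDerivAt (fun z ↦ thetaRatio (2 * z)) _ τ :=
    (hasDerivAt_thetaRatio hτ2).comp τ ((hasDerivAt_id τ).const_mul (2 : ℂ))
  have h := ((d1.fun_pow 2).fun_mul ((d2.fun_pow 2).const_add 1)).unique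
    ((d2.const_mul 2).congr_of_eventuallyEq
      ((eventually_im_pos hτ).mono fun z hz ↦ thetaRatio_sq_mul hz))
  have hr := thetaRatio_sq_mul hτ
  have n1 := thetaRatio_ne_zero hτ
  have hpi := pi_mul_I_ne_zero
  generalize thetaRatio τ = T at *
  generalize thetaRatio (2 * τ) = t at *
  generalize E₄₂ τ + E₄₂' τ = Q at *
  generalize E₄₂ (2 * τ) + E₄₂' (2 * τ) = R at *
  have key : Real.pi * I * T ^ 2 * (Q * (1 + t ^ 2)) = Real.pi * I * T ^ 2 * (R * (1 - t ^ 2)) := by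
    push_cast at h
    linear_combination 2 * h - Real.pi * I * R * hr
  exact mul_left_cancel₀ (mul_ne_zero hpi (pow_ne_zero 2 n1)) key

lemma E₄₂_add_mul_η {τ : ℂ} (hτ : 0 < τ.im) :
    (E₄₂ τ + E₄₂' τ) * (η (2 * τ) ^ 4 / η τ ^ 8) =
      (E₄₂ (2 * τ) + E₄₂' (2 * τ)) * (η (2 * (2 * τ)) ^ 4 / η (2 * τ) ^ 8) := by
  have h := E₄₂_add_mul_thetaRatio hτ
  rw [one_add_thetaRatio_two_mul_sq hτ, one_sub_thetaRatio_two_mul_sq hτ] at h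
  have n1 := η_ne_zero hτ
  have n2 := η_ne_zero (natCast_mul_im_pos hτ (c := 2) (by simp))
  have n4 := η_ne_zero (natCast_mul_im_pos hτ (c := 4) (by simp))
  have n8 := η_ne_zero (natCast_mul_im_pos hτ (c := 8) (by simp))
  push_cast at n2 n4 n8
  rw [show 2 * (2 * τ) = 4 * τ by ring]
  generalize η τ = e1 at *
  generalize η (2 * τ) = e2 at *
  generalize η (4 * τ) = e4 at *
  generalize η (8 * τ) = e8 at *
  field_simp at h ⊢
  linear_combination h

lemma thetaRatio_pow_four_add {τ : ℂ} (hτ : 0 < τ.im) :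
    thetaCoRatio τ ^ 4 + thetaRatio τ ^ 4 = 1 := by
  have h := η_quartic hτ
  have n2 := η_ne_zero (natCast_mul_im_pos hτ (c := 2) (by simp))
  push_cast at n2
  rw [thetaRatio, thetaCoRatio]
  generalize η (2 * τ) = e2 at *
  field_simp
  linear_combination -h

lemma E₄₂_sub_mul_thetaCoRatio {τ : ℂ} (hτ : 0 < τ.im) :
    (E₄₂ τ - E₄₂' τ) * thetaCoRatio τ ^ 4 = (E₄₂ τ + E₄₂' τ) * thetaRatio τ ^ 4 := by
  have h := (((hasDerivAt_thetaCoRatio hτ).fun_pow 4).fun_add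
    ((hasDerivAt_thetaRatio hτ).fun_pow 4)).unique
    ((hasDerivAt_const τ (1 : ℂ)).congr_of_eventuallyEq
      ((eventually_im_pos hτ).mono fun z hz ↦ thetaRatio_pow_four_add hz))
  push_cast at h
  refine mul_left_cancel₀ pi_mul_I_ne_zero ?_
  linear_combination -h

lemma two_pow_mul_im_pos {τ : ℂ} (hτ : 0 < τ.im) (N : ℕ) : 0 < (2 ^ N * τ).im := by
  simpa using natCast_mul_im_pos hτ (c := 2 ^ N) (by positivity)

lemma qq_two_pow_mul (τ : ℂ) (N : ℕ) : qq (2 ^ N * τ) = qq τ ^ 2 ^ N := by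
  simpa using qq_natCast_mul (2 ^ N) τ

lemma tendsto_qq_two_pow_mul {τ : ℂ} (hτ : 0 < τ.im) :
    Tendsto (fun N : ℕ ↦ qq (2 ^ N * τ)) atTop (𝓝 0) := by
  simp_rw [qq_two_pow_mul]
  exact (tendsto_pow_atTop_nhds_zero_of_norm_lt_one (norm_qq_lt_one hτ)).comp
    (tendsto_pow_atTop_atTop_of_one_lt one_lt_two)

lemma tendsto_eulerProd_two_pow_mul {τ : ℂ} (hτ : 0 < τ.im) :
    Tendsto (fun N : ℕ ↦ eulerProd (qq (2 ^ N * τ))) atTop (𝓝 1) := by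
  have h := (ModularForm.differentiableOn_tprod_one_sub_pow.differentiableAt
    (Metric.ball_mem_nhds (0 : ℂ) one_pos)).continuousAt.tendsto.comp (tendsto_qq_two_pow_mul hτ)
  simpa [eulerProd, Function.comp_def] using h

lemma tendsto_E₂_two_pow_mul {τ : ℂ} (hτ : 0 < τ.im) :
    Tendsto (fun N : ℕ ↦ E₂ (2 ^ N * τ)) atTop (𝓝 1) := by
  have hs : Summable fun n : ℕ ↦ sigmaC 1 (n + 1) * qq τ ^ (n + 1) := by
    have := (summable_nat_add_iff 1).mpr
      (EisensteinSeries.summable_sigma_mul_cexp_pow (k := 2) one_le_two ⟨τ, hτ⟩)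
    simpa [sigmaC, qq, ArithmeticFunction.sigma_apply] using this
  have h : Tendsto (fun N : ℕ ↦ ∑' n : ℕ, sigmaC 1 (n + 1) * qq (2 ^ N * τ) ^ (n + 1)) atTop
      (𝓝 (∑' n : ℕ, sigmaC 1 (n + 1) * 0 ^ (n + 1))) := by
    refine tendsto_tsum_of_dominated_convergence hs.norm
      (fun n ↦ ((tendsto_qq_two_pow_mul hτ).pow (n + 1)).const_mul _)
      (.of_forall fun N n ↦ ?_)
    rw [norm_mul, norm_mul, norm_pow, norm_pow, qq_two_pow_mul, norm_pow]
    gcongr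
    exact pow_le_of_le_one (norm_nonneg _) (norm_qq_lt_one hτ).le (by positivity)
  simpa [E₂] using (h.const_mul 24).const_sub 1

lemma η_quotient_eq (τ : ℂ) :
    η (2 * τ) ^ 4 / η τ ^ 8 = eulerProd (qq (2 * τ)) ^ 4 / eulerProd (qq τ) ^ 8 := by
  have e1 := η_natCast_mul 1 τ
  have e2 := η_natCast_mul 2 τ
  have e3 := qq_natCast_mul 2 τ
  push_cast [one_mul, pow_one] at e1 e2 e3
  have h0 : Complex.exp (Real.pi * I * τ / 12) ≠ 0 := Complex.exp_ne_zero _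
  rw [e1, e2, e3, mul_pow, mul_pow, ← pow_mul, mul_div_mul_left _ _ (pow_ne_zero _ h0)]

lemma E₄₂_add_eq {τ : ℂ} (hτ : 0 < τ.im) :
    E₄₂ τ + E₄₂' τ = 2 * η τ ^ 8 / η (2 * τ) ^ 4 := by
  have hconst (N : ℕ) : (E₄₂ (2 ^ N * τ) + E₄₂' (2 ^ N * τ)) *
      (η (2 * (2 ^ N * τ)) ^ 4 / η (2 ^ N * τ) ^ 8) =
      (E₄₂ τ + E₄₂' τ) * (η (2 * τ) ^ 4 / η τ ^ 8) := by
    induction N with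
    | zero => simp
    | succ N ih =>
      rw [← ih, E₄₂_add_mul_η (two_pow_mul_im_pos hτ N),
        show 2 ^ (N + 1) * τ = 2 * (2 ^ N * τ) by ring]
  have s1 (N : ℕ) : 2 ^ (N + 1) * τ = 2 * (2 ^ N * τ) := by ring
  have s2 (N : ℕ) : 2 ^ (N + 2) * τ = 4 * (2 ^ N * τ) := by ring
  have l0 := tendsto_E₂_two_pow_mul hτ
  have l1 := (tendsto_add_atTop_iff_nat 1).mpr l0
  have l2 := (tendsto_add_atTop_iff_nat 2).mpr l0
  have m0 := tendsto_eulerProd_two_pow_mul hτ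
  have m1 := (tendsto_add_atTop_iff_nat 1).mpr m0
  simp only [s1] at l1 m1
  simp only [s2] at l2
  have hl := (((((l2.const_mul 4).sub l0).div_const 3).add
    (((l2.const_mul 4).sub (l1.const_mul 4)).add l0)).mul
    ((m1.pow 4).div (m0.pow 8) (by simp)))
  have h := tendsto_nhds_unique (hl.congr fun N ↦ ?_) (tendsto_const_nhds
    (x := (E₄₂ τ + E₄₂' τ) * (η (2 * τ) ^ 4 / η τ ^ 8)))
  · have n1 := η_ne_zero hτ
    have n2 := η_ne_zero (natCast_mul_im_pos hτ (c := 2) (by simp))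
    push_cast at n2
    norm_num at h
    field_simp at h ⊢
    linear_combination -h
  · rw [← hconst N, η_quotient_eq]
    simp only [E₄₂, E₄₂', Pi.div_apply]

lemma E₄₂_sub_eq {τ : ℂ} (hτ : 0 < τ.im) :
    E₄₂ τ - E₄₂' τ = 32 * η (4 * τ) ^ 8 / η (2 * τ) ^ 4 := by
  have h := E₄₂_sub_mul_thetaCoRatio hτ
  have n1 := η_ne_zero hτ
  have n2 := η_ne_zero (natCast_mul_im_pos hτ (c := 2) (by simp))
  have n4 := η_ne_zero (natCast_mul_im_pos hτ (c := 4) (by simp))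
  push_cast at n2 n4
  rw [E₄₂_add_eq hτ, thetaRatio, thetaCoRatio] at h
  generalize η τ = e1 at *
  generalize η (2 * τ) = e2 at *
  generalize η (4 * τ) = e4 at *
  field_simp at h ⊢
  linear_combination h

theorem stmt17 (τ : ℂ) (hτ : 0 < τ.im) :
    E₄₂ τ - E₄₂' τ = 32 * η (4 * τ) ^ 8 / η (2 * τ) ^ 4 ∧
    E₄₂ τ + E₄₂' τ = 2 * η τ ^ 8 / η (2 * τ) ^ 4 ∧
    E₄₂ τ ^ 2 - E₄₂' τ ^ 2 = 64 * (η τ * η (4 * τ) / η (2 * τ)) ^ 8 ∧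
    η (2 * τ) ^ 24 = (η τ * η (4 * τ)) ^ 8 * (η τ ^ 8 + 16 * η (4 * τ) ^ 8) := by
  refine ⟨E₄₂_sub_eq hτ, E₄₂_add_eq hτ, ?_, η_quartic hτ⟩
  rw [sq_sub_sq, E₄₂_sub_eq hτ, E₄₂_add_eq hτ]
  have n2 := η_ne_zero (natCast_mul_im_pos hτ (c := 2) (by simp))
  push_cast at n2
  field_simp
  ring
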